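/- For each k ≥ 1 and |q| < 1: Σ_{λ: l(λ) ≤ k} q^{2|λ| + 2n_2(λ) - λ_1^2} (-q;q^2)_{λ_1} / ((-q^2;q^2)_{λ_k} (q^2;q^2)_λ) = ((-q;q^2)_∞ / (q^2;q^2)_∞) · (q^{4k+2}, q^{4k+1}, q; q^{4k+2})_∞. -/

import Mathlib

/-- Finite q-Pochhammer symbol `(x;q)_n = ∏_{k=0}^{n-1} (1 - x q^k)`. -/
noncomputable def qPoch (x q : ℂ) (n : ℕ) : ℂ := ∏ k ∈ Finset.range n, (1 - x * q ^ k)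

/-- Infinite q-Pochhammer symbol `(x;q)_∞ = ∏_{k≥0} (1 - x q^k)`. -/
noncomputable def qPochInf (x q : ℂ) : ℂ := ∏' k : ℕ, (1 - x * q ^ k)

/-- Partitions with at most `k` (positive) parts: antitone sequences of naturals vanishing
from index `k` on; `l 0` is the largest part `λ_1`, and `l (k-1)` is `λ_k`. -/
def PartK (k : ℕ) : Type := {l : ℕ → ℕ // Antitone l ∧ ∀ i, k ≤ i → l i = 0}

/-- `|λ| = Σ_i λ_i`. -/
def wtK (k : ℕ) (l : PartK k) : ℕ := ∑ i ∈ Finset.range k, l.1 i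

/-- `n_2(λ) = Σ_i λ_i^2`. -/
def n2K (k : ℕ) (l : PartK k) : ℕ := ∑ i ∈ Finset.range k, (l.1 i) ^ 2

/-- `n(λ) = Σ_i binom(λ_i, 2)`. -/
def nK (k : ℕ) (l : PartK k) : ℕ := ∑ i ∈ Finset.range k, Nat.choose (l.1 i) 2

/-- `(x;q)_λ = ∏_{i=1}^{k} (x;q)_{λ_i - λ_{i+1}}` (with `λ_{k+1} = 0`). -/
noncomputable def pochK (x q : ℂ) (k : ℕ) (l : PartK k) : ℂ :=
  ∏ i ∈ Finset.range k, qPoch x q (l.1 i - l.1 (i + 1))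

/-!
The identity is the end of a Bailey chain. Write `Q = q²`. The finite Jacobi triple product, read
as a Bailey pair and specialised to kill its product side, is the unit Bailey pair relative
to `Q`. Apply Bailey's lemma with one parameter at infinity and the other equal to `-Q` once, and
to `0` another `k - 1` times: every step multiplies the `α`-side by a power of `Q`, and unfolding
the `β`-side produces a sum over partitions, one step for each part. In the last step the parameter
is `-q³` and the length tends to infinity: the `β`-side becomes the multiple sum, and the `α`-side a
theta series of nome `q ^ (4k + 2)`, which the Jacobi triple product evaluates.
-/

open Finset Filter Topology

section QPochhammer

variable (x Q : ℂ)

lemma qPoch_zero : qPoch x Q 0 = 1 := by simp [qPoch]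

lemma qPoch_succ (n : ℕ) : qPoch x Q (n + 1) = qPoch x Q n * (1 - x * Q ^ n) :=
  prod_range_succ _ _

lemma qPoch_add (m n : ℕ) : qPoch x Q (m + n) = qPoch x Q m * qPoch (x * Q ^ m) Q n := by
  simp only [qPoch, prod_range_add, pow_add, mul_assoc]

lemma qPoch_succ_left (n : ℕ) : qPoch x Q (n + 1) = (1 - x) * qPoch (x * Q) Q n := by
  rw [add_comm, qPoch_add, qPoch_succ, qPoch_zero]
  simp

lemma qPoch_zero_left (n : ℕ) : qPoch 0 Q n = 1 := by simp [qPoch]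

variable {x Q}

lemma one_sub_mul_pow_ne_zero (hx : ∀ n, qPoch x Q n ≠ 0) (n : ℕ) : 1 - x * Q ^ n ≠ 0 :=
  right_ne_zero_of_mul (qPoch_succ x Q n ▸ hx (n + 1))

lemma qPoch_mul_pow_ne_zero (hx : ∀ n, qPoch x Q n ≠ 0) (m n : ℕ) :
    qPoch (x * Q ^ m) Q n ≠ 0 :=
  right_ne_zero_of_mul (qPoch_add x Q m n ▸ hx (m + n))

end QPochhammer

section Antidiagonal

variable {M : Type*} [AddCommMonoid M]

lemma sum_antidiagonal_assoc (f : ℕ → ℕ → ℕ → M) (n : ℕ) :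
    ∑ p ∈ antidiagonal n, ∑ q ∈ antidiagonal p.1, f q.1 q.2 p.2 =
      ∑ p ∈ antidiagonal n, ∑ q ∈ antidiagonal p.2, f p.1 q.1 q.2 := by
  rw [sum_sigma', sum_sigma']
  refine sum_nbij' (fun x ↦ ⟨(x.2.1, x.2.2 + x.1.2), (x.2.2, x.1.2)⟩)
    (fun x ↦ ⟨(x.1.1 + x.2.1, x.2.2), (x.1.1, x.2.1)⟩) ?_ ?_ ?_ ?_ ?_ <;>
  grind [HasAntidiagonal.mem_antidiagonal]

lemma sum_antidiagonal_two_mul_add_one (f : ℕ × ℕ → M) (n : ℕ) :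
    ∑ p ∈ antidiagonal (2 * n + 1), f p =
      ∑ p ∈ antidiagonal n, (f (p.2, n + 1 + p.1) + f (n + 1 + p.1, p.2)) := by
  rw [sum_add_distrib, ← Nat.sum_antidiagonal_swap (n := n) (f := fun p ↦ f (p.2, n + 1 + p.1))]
  simp only [Nat.sum_antidiagonal_eq_sum_range_succ_mk, Prod.fst_swap, Prod.snd_swap]
  rw [show (2 * n + 1).succ = (n + 1) + (n + 1) by omega, sum_range_add]
  congr 1 <;> refine sum_congr rfl fun k hk ↦ ?_ <;> congr 2 <;> grind

end Antidiagonal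

/-- The `q`-Pascal rule, summed over a row: it splits `1 - Q ^ (i + j)` as
`(1 - Q ^ i) + Q ^ i * (1 - Q ^ j)`. -/
lemma q_pascal_sum {Q : ℂ} (hQ : ∀ n, qPoch Q Q n ≠ 0) (f : ℕ × ℕ → ℂ) (n : ℕ) :
    (1 - Q * Q ^ n) * ∑ p ∈ antidiagonal (n + 1), f p / (qPoch Q Q p.1 * qPoch Q Q p.2) =
      ∑ p ∈ antidiagonal n,
        (f (p.1 + 1, p.2) + Q ^ p.1 * f (p.1, p.2 + 1)) / (qPoch Q Q p.1 * qPoch Q Q p.2) := by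
  have split : ∀ p ∈ antidiagonal (n + 1),
      (1 - Q * Q ^ n) * (f p / (qPoch Q Q p.1 * qPoch Q Q p.2)) =
        (1 - Q ^ p.1) * f p / (qPoch Q Q p.1 * qPoch Q Q p.2) +
          Q ^ p.1 * (1 - Q ^ p.2) * f p / (qPoch Q Q p.1 * qPoch Q Q p.2) := by
    intro p hp
    rw [← pow_succ', ← mem_antidiagonal.1 hp]
    ring
  rw [mul_sum, sum_congr rfl split, sum_add_distrib, Nat.sum_antidiagonal_succ,
    Nat.sum_antidiagonal_succ', ← add_assoc]
  simp only [pow_zero, sub_self, zero_mul, mul_zero, zero_div, zero_add, add_zero,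
    ← sum_add_distrib]
  refine sum_congr rfl fun p _ ↦ ?_
  have hfst := one_sub_mul_pow_ne_zero hQ p.1
  have hsnd := one_sub_mul_pow_ne_zero hQ p.2
  have hQfst := hQ p.1
  have hQsnd := hQ p.2
  rw [qPoch_succ, qPoch_succ, pow_succ', pow_succ']
  field_simp

/-- The factor `(-1)^n Q^{n(n-1)/2} b^n (d/b;Q)_n` of the `q`-Chu–Vandermonde sum and of the
one-parameter Bailey lemma, written as a product that makes sense at `b = 0`. -/
noncomputable def vandermondeWeight (b d Q : ℂ) (n : ℕ) : ℂ :=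
  ∏ l ∈ range n, Q ^ l * (d * Q ^ l - b)

section VandermondeWeight

variable (b d Q : ℂ) (n : ℕ)

lemma vandermondeWeight_zero : vandermondeWeight b d Q 0 = 1 := prod_range_zero _

lemma vandermondeWeight_succ :
    vandermondeWeight b d Q (n + 1) = vandermondeWeight b d Q n * (Q ^ n * (d * Q ^ n - b)) :=
  prod_range_succ _ _

lemma vandermondeWeight_add (m : ℕ) :
    vandermondeWeight b d Q (m + n) =
      vandermondeWeight b d Q m * vandermondeWeight (b * Q ^ m) (d * Q ^ (2 * m)) Q n := by
  simp only [vandermondeWeight, prod_range_add]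
  congr 1
  exact prod_congr rfl fun l _ ↦ by ring

lemma vandermondeWeight_mul_mul :
    vandermondeWeight (b * Q) (d * Q) Q n = Q ^ n * vandermondeWeight b d Q n := by
  induction n with
  | zero => simp [vandermondeWeight_zero]
  | succ n ih =>
    rw [vandermondeWeight_succ, ih, vandermondeWeight_succ]
    ring

lemma vandermondeWeight_zero_right :
    vandermondeWeight b 0 Q n = (-b) ^ n * Q ^ n.choose 2 := by
  induction n with
  | zero => simp [vandermondeWeight_zero]
  | succ n ih =>
    rw [vandermondeWeight_succ, ih, Nat.choose_succ_succ' n 1, Nat.choose_one_right]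
    ring

lemma vandermondeWeight_zero_left : vandermondeWeight 0 (Q * Q) Q n = Q ^ (n ^ 2 + n) := by
  induction n with
  | zero => simp [vandermondeWeight_zero]
  | succ n ih =>
    rw [vandermondeWeight_succ, ih]
    ring

lemma vandermondeWeight_neg_self :
    vandermondeWeight (-Q) (Q * Q) Q n = Q ^ (n + 1).choose 2 * qPoch (-Q) Q n := by
  induction n with
  | zero => simp [vandermondeWeight_zero, qPoch_zero]
  | succ n ih =>
    rw [vandermondeWeight_succ, ih, qPoch_succ, Nat.choose_succ_succ' (n + 1) 1,
      Nat.choose_one_right]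
    ring

lemma vandermondeWeight_neg_cube (q : ℂ) :
    vandermondeWeight (-q ^ 3) (q ^ 2 * q ^ 2) (q ^ 2) n =
      q ^ (n ^ 2 + 2 * n) * qPoch (-q) (q ^ 2) n := by
  induction n with
  | zero => simp [vandermondeWeight_zero, qPoch_zero]
  | succ n ih =>
    rw [vandermondeWeight_succ, ih, qPoch_succ]
    ring

end VandermondeWeight

theorem q_chu_vandermonde {Q : ℂ} (hQ : ∀ n, qPoch Q Q n ≠ 0) (n : ℕ) (b d : ℂ)
    (hd : ∀ m, qPoch d Q m ≠ 0) :
    ∑ p ∈ antidiagonal n,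
        vandermondeWeight b d Q p.1 / qPoch d Q p.1 / (qPoch Q Q p.1 * qPoch Q Q p.2) =
      qPoch b Q n / (qPoch Q Q n * qPoch d Q n) := by
  induction n generalizing b d with
  | zero => simp [qPoch_zero, vandermondeWeight_zero]
  | succ n ih =>
    have hdQ (m : ℕ) : qPoch (d * Q) Q m ≠ 0 := by simpa using qPoch_mul_pow_ne_zero hd 1 m
    have hd₁ : 1 - d ≠ 0 := by simpa using one_sub_mul_pow_ne_zero hd 0
    have contract (i : ℕ) :
        vandermondeWeight b d Q (i + 1) / qPoch d Q (i + 1) +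
            Q ^ i * (vandermondeWeight b d Q i / qPoch d Q i) =
          (1 - b) / (1 - d) *
            (vandermondeWeight (b * Q) (d * Q) Q i / qPoch (d * Q) Q i) := by
      have hdi := one_sub_mul_pow_ne_zero hd i
      have shift := qPoch_succ_left d Q i
      rw [qPoch_succ] at shift
      rw [div_mul_div_comm, ← shift, vandermondeWeight_succ, vandermondeWeight_mul_mul, qPoch_succ,
        ← mul_div_assoc, ← mul_div_mul_right (Q ^ i * _) _ hdi, ← add_div]
      ring
    apply mul_left_cancel₀ (one_sub_mul_pow_ne_zero hQ n)
    rw [q_pascal_sum hQ fun p ↦ vandermondeWeight b d Q p.1 / qPoch d Q p.1]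
    simp only [contract, mul_div_assoc]
    rw [← mul_sum]
    simp only [← mul_div_assoc]
    rw [ih _ _ hdQ, qPoch_succ_left b, qPoch_succ_left d, qPoch_succ Q]
    have hn := one_sub_mul_pow_ne_zero hQ n
    have hQn := hQ n
    have hdQn := hdQ n
    field_simp

/-- `(α, β)` is a Bailey pair relative to `a`, with base `Q`. -/
def IsBaileyPair (a Q : ℂ) (α β : ℕ → ℂ) : Prop :=
  ∀ n, β n = ∑ p ∈ antidiagonal n, α p.1 / (qPoch Q Q p.2 * qPoch (a * Q) Q (n + p.1))

/-- The lower triangular transform of `β` by the kernel `k`: the entry carrying `β m` to the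
index `m + s` is `k m s`. -/
def kernelSum {R : Type*} [CommSemiring R] (k : ℕ → ℕ → R) (β : ℕ → R) (n : ℕ) : R :=
  ∑ p ∈ antidiagonal n, k p.1 p.2 * β p.1

/-- The kernel of the one-parameter Bailey lemma. -/
noncomputable def baileyKernel (b d Q : ℂ) (m s : ℕ) : ℂ :=
  vandermondeWeight b d Q m / qPoch Q Q s

lemma sum_vandermondeWeight_add_div {b d Q : ℂ} (hQ : ∀ n, qPoch Q Q n ≠ 0)
    (hd : ∀ n, qPoch d Q n ≠ 0) (hb : ∀ n, qPoch b Q n ≠ 0) (r s : ℕ) :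
    ∑ p ∈ antidiagonal s, vandermondeWeight b d Q (r + p.1) /
        (qPoch Q Q p.2 * (qPoch Q Q p.1 * qPoch d Q (r + p.1 + r))) =
      vandermondeWeight b d Q r * qPoch b Q (r + s) /
        (qPoch b Q r * (qPoch Q Q s * qPoch d Q (r + s + r))) := by
  have factor (p : ℕ × ℕ) : vandermondeWeight b d Q (r + p.1) /
        (qPoch Q Q p.2 * (qPoch Q Q p.1 * qPoch d Q (r + p.1 + r))) =
      vandermondeWeight b d Q r / qPoch d Q (2 * r) *
        (vandermondeWeight (b * Q ^ r) (d * Q ^ (2 * r)) Q p.1 /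
          qPoch (d * Q ^ (2 * r)) Q p.1 / (qPoch Q Q p.1 * qPoch Q Q p.2)) := by
    rw [show r + p.1 + r = 2 * r + p.1 by ring, qPoch_add d, vandermondeWeight_add]
    ring
  rw [sum_congr rfl fun p _ ↦ factor p, ← mul_sum,
    q_chu_vandermonde hQ s _ _ (qPoch_mul_pow_ne_zero hd (2 * r)),
    show r + s + r = 2 * r + s by ring, qPoch_add d, qPoch_add b]
  have := hb r
  field_simp

/-- Bailey's lemma with one of its two parameters sent to infinity. -/
theorem IsBaileyPair.step {a b Q : ℂ} {α β : ℕ → ℂ} (h : IsBaileyPair a Q α β)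
    (hQ : ∀ n, qPoch Q Q n ≠ 0) (ha : ∀ n, qPoch (a * Q) Q n ≠ 0) (hb : ∀ n, qPoch b Q n ≠ 0) :
    IsBaileyPair a Q (fun r ↦ vandermondeWeight b (a * Q) Q r / qPoch b Q r * α r)
      (fun n ↦ kernelSum (baileyKernel b (a * Q) Q) β n / qPoch b Q n) := by
  intro n
  set d := a * Q
  calc kernelSum (baileyKernel b d Q) β n / qPoch b Q n
      = (∑ p ∈ antidiagonal n, ∑ q ∈ antidiagonal p.1, α q.1 *
          (vandermondeWeight b d Q (q.1 + q.2) /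
            (qPoch Q Q p.2 * (qPoch Q Q q.2 * qPoch d Q (q.1 + q.2 + q.1))))) /
              qPoch b Q n := by
        congr 1
        refine sum_congr rfl fun p _ ↦ ?_
        rw [h p.1, mul_sum]
        refine sum_congr rfl fun q hq ↦ ?_
        rw [mem_antidiagonal.1 hq, baileyKernel, div_mul_div_comm, mul_comm _ (α q.1),
          mul_div_assoc]
    _ = (∑ p ∈ antidiagonal n, α p.1 * (vandermondeWeight b d Q p.1 * qPoch b Q n /
          (qPoch b Q p.1 * (qPoch Q Q p.2 * qPoch d Q (n + p.1))))) / qPoch b Q n := by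
        rw [sum_antidiagonal_assoc fun i j l ↦ α i * (vandermondeWeight b d Q (i + j) /
          (qPoch Q Q l * (qPoch Q Q j * qPoch d Q (i + j + i))))]
        congr 1
        refine sum_congr rfl fun p hp ↦ ?_
        rw [← mul_sum, sum_vandermondeWeight_add_div hQ ha hb, mem_antidiagonal.1 hp]
    _ = _ := by
        rw [sum_div]
        refine sum_congr rfl fun p _ ↦ ?_
        have := hb n
        field_simp

section Theta

/-- The coefficients `(-w)^j (zw)^{j(j-1)/2}`, `j ∈ ℤ`, of the Jacobi triple product with
nome `z * w`; the negative powers of `w` are absorbed by the powers of `z * w`, so that no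
division occurs. -/
noncomputable def thetaCoeff (z w : ℂ) : ℤ → ℂ
  | .ofNat r => vandermondeWeight w 0 (z * w) r
  | .negSucc r => vandermondeWeight z 0 (z * w) (r + 1)

variable (z w : ℂ)

lemma thetaCoeff_natCast (r : ℕ) : thetaCoeff z w r = vandermondeWeight w 0 (z * w) r := rfl

lemma thetaCoeff_neg_natCast (r : ℕ) :
    thetaCoeff z w (-r) = vandermondeWeight z 0 (z * w) r := by
  cases r with
  | zero =>
    rw [Nat.cast_zero, neg_zero, ← Nat.cast_zero, thetaCoeff_natCast, vandermondeWeight_zero,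
      vandermondeWeight_zero]
  | succ r => rfl

lemma pow_mul_thetaCoeff_add_one {i j m n : ℕ} (h : i + j = m + n) :
    (z * w) ^ i * thetaCoeff z w (j - m + 1) =
      -(w * (z * w) ^ n) * thetaCoeff z w (j - m) := by
  obtain hj | hj := le_or_gt m j
  · obtain ⟨r, rfl⟩ := Nat.exists_eq_add_of_le hj
    obtain rfl : n = i + r := by omega
    rw [show ((m + r : ℕ) : ℤ) - m = r by push_cast; ring, ← Nat.cast_add_one,
      thetaCoeff_natCast, thetaCoeff_natCast, vandermondeWeight_succ]
    ring
  · obtain ⟨r, rfl⟩ := Nat.exists_eq_add_of_lt hj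
    obtain rfl : i = n + r + 1 := by omega
    rw [show (j : ℤ) - (j + r + 1 : ℕ) + 1 = -r by push_cast; ring,
      show (j : ℤ) - (j + r + 1 : ℕ) = -(r + 1 : ℕ) by push_cast; ring,
      thetaCoeff_neg_natCast, thetaCoeff_neg_natCast, vandermondeWeight_succ]
    ring

variable {z w}

theorem finite_jacobi_triple_product (hP : ∀ n, qPoch (z * w) (z * w) n ≠ 0) (m n : ℕ) :
    ∑ p ∈ antidiagonal (m + n), thetaCoeff z w (p.2 - m) /
        (qPoch (z * w) (z * w) p.1 * qPoch (z * w) (z * w) p.2) =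
      qPoch w (z * w) n * qPoch z (z * w) m / qPoch (z * w) (z * w) (m + n) := by
  set P := z * w with hzw
  induction n with
  | zero =>
    have coeff : ∀ p ∈ antidiagonal m,
        thetaCoeff z w (p.2 - m) = vandermondeWeight z 0 P p.1 / qPoch 0 P p.1 := by
      intro p hp
      rw [← mem_antidiagonal.1 hp, qPoch_zero_left, div_one, ← thetaCoeff_neg_natCast]
      congr 1
      push_cast
      ring
    rw [add_zero, sum_congr rfl fun p hp ↦ by rw [coeff p hp],
      q_chu_vandermonde hP m z 0 (by simp [qPoch_zero_left])]
    simp [qPoch_zero, qPoch_zero_left]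
  | succ n ih =>
    have step : ∀ p ∈ antidiagonal (m + n),
        thetaCoeff z w (p.2 - m) + P ^ p.1 * thetaCoeff z w ((p.2 + 1 : ℕ) - m) =
          (1 - w * P ^ n) * thetaCoeff z w (p.2 - m) := by
      intro p hp
      rw [Nat.cast_succ, add_sub_right_comm,
        pow_mul_thetaCoeff_add_one z w (mem_antidiagonal.1 hp), ← hzw]
      ring
    have hlast := one_sub_mul_pow_ne_zero hP (m + n)
    apply mul_left_cancel₀ hlast
    rw [← add_assoc, q_pascal_sum hP fun p ↦ thetaCoeff z w (p.2 - m),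
      sum_congr rfl fun p hp ↦ by rw [step p hp, mul_div_assoc], ← mul_sum, ih,
      qPoch_succ w, qPoch_succ P]
    have hPmn := hP (m + n)
    field_simp

/-- The sum of the terms of index `r` and `-(r + 1)` of the bilateral theta series
`∑ (-w)^j (zw)^{j(j-1)/2}`. -/
def thetaTerm (z w : ℂ) (r : ℕ) : ℂ :=
  (-w) ^ r * (z * w) ^ r.choose 2 * (1 - z ^ (2 * r + 1))

lemma thetaTerm_eq_add (r : ℕ) :
    thetaTerm z w r = thetaCoeff z w r + thetaCoeff z w (-(r + 1 : ℕ)) := by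
  rw [thetaCoeff_natCast, thetaCoeff_neg_natCast, vandermondeWeight_zero_right,
    vandermondeWeight_zero_right, Nat.choose_succ_succ' r 1, Nat.choose_one_right, thetaTerm]
  ring

lemma thetaTerm_mul_pow (c : ℂ) (r : ℕ) :
    thetaTerm z w r * c ^ (r + 1).choose 2 = thetaTerm z (w * c) r := by
  rw [thetaTerm, thetaTerm, Nat.choose_succ_succ' r 1, Nat.choose_one_right]
  ring

lemma two_mul_choose_two_add_self (r : ℕ) : 2 * r.choose 2 + r = r ^ 2 := by
  induction r with
  | zero => rfl
  | succ r ih =>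
    rw [Nat.choose_succ_succ' r 1, Nat.choose_one_right]
    linarith

lemma thetaTerm_sq_mul_pow (r : ℕ) :
    thetaTerm (z ^ 2) w r * z ^ (r ^ 2 + 2 * r) =
      (1 + z ^ (2 * r + 1)) * thetaTerm z (z ^ 3 * w) r := by
  rw [thetaTerm, thetaTerm, ← two_mul_choose_two_add_self r]
  ring

theorem isBaileyPair_thetaTerm (hP : ∀ n, qPoch (z * w) (z * w) n ≠ 0) :
    IsBaileyPair (z * w) (z * w) (fun r ↦ thetaTerm z w r / (1 - z * w))
      (fun n ↦ qPoch w (z * w) n * qPoch z (z * w) (n + 1) /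
        qPoch (z * w) (z * w) (2 * n + 1)) := by
  intro n
  beta_reduce
  have fold := finite_jacobi_triple_product hP (n + 1) n
  rw [show n + 1 + n = 2 * n + 1 by ring, sum_antidiagonal_two_mul_add_one] at fold
  rw [← fold]
  refine sum_congr rfl fun p hp ↦ ?_
  have h : n = p.1 + p.2 := (mem_antidiagonal.1 hp).symm
  rw [thetaTerm_eq_add, div_div, mul_left_comm, ← qPoch_succ_left,
    show n + 1 + p.1 = n + p.1 + 1 by ring, mul_comm (qPoch _ _ (n + p.1 + 1)), ← add_div]
  congr 3 <;> rw [h] <;> push_cast <;> ring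

end Theta

section BaileyChain

variable {Q : ℂ}

lemma isBaileyPair_unit (hQ : ∀ n, qPoch Q Q n ≠ 0) :
    IsBaileyPair Q Q (fun r ↦ thetaTerm Q 1 r / (1 - Q)) (Pi.single 0 1) := by
  have h := isBaileyPair_thetaTerm (z := Q) (w := 1) (by simpa using hQ)
  rw [mul_one] at h
  convert h using 1
  funext n
  cases n with
  | zero => simp [qPoch_zero, div_self (hQ 1)]
  | succ n => simp [qPoch_succ_left 1]

/-- The `β`-sequences of the Bailey chain that starts at the unit Bailey pair, makes one step
with parameter `-Q` and then `K` steps with parameter `0`. -/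
noncomputable def chainBeta (Q : ℂ) (K : ℕ) : ℕ → ℂ :=
  (kernelSum (baileyKernel 0 (Q * Q) Q))^[K] fun n ↦ (qPoch Q Q n * qPoch (-Q) Q n)⁻¹

theorem isBaileyPair_chainBeta (hQ : ∀ n, qPoch Q Q n ≠ 0) (hQ' : ∀ n, qPoch (-Q) Q n ≠ 0)
    (K : ℕ) :
    IsBaileyPair Q Q (fun r ↦ thetaTerm Q (Q ^ (2 * K + 1)) r / (1 - Q)) (chainBeta Q K) := by
  have hQQ (n : ℕ) : qPoch (Q * Q) Q n ≠ 0 := by simpa using qPoch_mul_pow_ne_zero hQ 1 n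
  induction K with
  | zero =>
    convert (isBaileyPair_unit hQ).step hQ hQQ hQ' using 1
    · funext r
      rw [vandermondeWeight_neg_self, mul_div_cancel_right₀ _ (hQ' r), mul_div_left_comm,
        ← mul_div_assoc, thetaTerm_mul_pow]
      simp
    · funext n
      rw [kernelSum, sum_eq_single (0, n)]
      · simp [chainBeta, baileyKernel, vandermondeWeight_zero, div_eq_mul_inv, mul_comm]
      · rintro ⟨i, j⟩ hp hne
        have : i ≠ 0 := by rintro rfl; simp_all
        simp [this]
      · simp
  | succ K ih =>
    convert ih.step (b := 0) hQ hQQ (by simp [qPoch_zero_left]) using 1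
    · funext r
      have hr : r ^ 2 + r = 2 * (r + 1).choose 2 := by
        have := two_mul_choose_two_add_self (r + 1)
        linarith
      rw [vandermondeWeight_zero_left, qPoch_zero_left, div_one, mul_div_left_comm,
        ← mul_div_assoc, hr, pow_mul, thetaTerm_mul_pow, ← pow_add]
      congr 3
    · funext n
      rw [qPoch_zero_left, div_one, chainBeta, Function.iterate_succ_apply']
      rfl

end BaileyChain

section InfiniteQPochhammer

variable {x Q : ℂ}

lemma qPoch_ne_zero (hx : ‖x‖ < 1) (hQ : ‖Q‖ < 1) (n : ℕ) : qPoch x Q n ≠ 0 := by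
  refine prod_ne_zero_iff.2 fun k _ ↦ sub_ne_zero.2 fun h ↦ ?_
  have : ‖x * Q ^ k‖ < 1 := by
    rw [norm_mul, norm_pow]
    exact mul_lt_one_of_nonneg_of_lt_one_left (norm_nonneg _) hx
      (pow_le_one₀ (norm_nonneg _) hQ.le)
  simp [← h] at this

lemma summable_norm_neg_mul_pow (x : ℂ) (hQ : ‖Q‖ < 1) : Summable fun n ↦ ‖-(x * Q ^ n)‖ := by
  simpa only [norm_neg, norm_mul, norm_pow] using
    (summable_geometric_of_lt_one (norm_nonneg Q) hQ).mul_left ‖x‖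

lemma tendsto_qPoch (x : ℂ) (hQ : ‖Q‖ < 1) :
    Tendsto (qPoch x Q) atTop (𝓝 (qPochInf x Q)) := by
  have := (multipliable_one_add_of_summable (summable_norm_neg_mul_pow x hQ)).hasProd
  simp only [← sub_eq_add_neg] at this
  exact this.tendsto_prod_nat

lemma qPochInf_ne_zero (hx : ‖x‖ < 1) (hQ : ‖Q‖ < 1) : qPochInf x Q ≠ 0 := by
  have := tprod_one_add_ne_zero_of_summable (f := fun n ↦ -(x * Q ^ n))
    (fun n ↦ by
      rw [← sub_eq_add_neg]
      exact one_sub_mul_pow_ne_zero (qPoch_ne_zero hx hQ) n)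
    (summable_norm_neg_mul_pow x hQ)
  simp only [← sub_eq_add_neg] at this
  exact this

lemma qPochInf_eq_one_sub_mul (x : ℂ) (hQ : ‖Q‖ < 1) :
    qPochInf x Q = (1 - x) * qPochInf (x * Q) Q := by
  refine tendsto_nhds_unique ((tendsto_qPoch x hQ).comp (tendsto_add_atTop_nat 1)) ?_
  simpa only [Function.comp_def, qPoch_succ_left] using (tendsto_qPoch _ hQ).const_mul (1 - x)

lemma exists_norm_le_of_tendsto {E : Type*} [SeminormedAddGroup E] {u : ℕ → E} {l : E}
    (hu : Tendsto u atTop (𝓝 l)) :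
    ∃ C, ∀ n, ‖u n‖ ≤ C := by
  simpa using isBounded_iff_forall_norm_le.1 (Metric.isBounded_range_of_tendsto u hu)

lemma tendsto_inv_qPoch (hx : ‖x‖ < 1) (hQ : ‖Q‖ < 1) :
    Tendsto (fun n ↦ (qPoch x Q n)⁻¹) atTop (𝓝 (qPochInf x Q)⁻¹) :=
  (tendsto_qPoch x hQ).inv₀ (qPochInf_ne_zero hx hQ)

lemma summable_norm_vandermondeWeight (b d : ℂ) (hQ : ‖Q‖ < 1) :
    Summable fun n ↦ ‖vandermondeWeight b d Q n‖ := by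
  have hQn := tendsto_pow_atTop_nhds_zero_of_norm_lt_one hQ
  have factor : Tendsto (fun n ↦ ‖Q ^ n * (d * Q ^ n - b)‖) atTop (𝓝 0) := by
    simpa using (hQn.mul ((hQn.const_mul d).sub_const b)).norm
  refine summable_of_ratio_norm_eventually_le (r := 1 / 2) (by norm_num) ?_
  filter_upwards [factor.eventually_le_const (show (0 : ℝ) < 1 / 2 by norm_num)] with n hn
  rw [norm_norm, norm_norm, vandermondeWeight_succ, norm_mul, mul_comm]
  gcongr

end InfiniteQPochhammer

/-- Tannery's theorem for Cauchy products. -/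
theorem tendsto_sum_antidiagonal_mul {R : Type*} [NormedRing R] [CompleteSpace R] {f L : ℕ → R}
    {g : ℕ → ℕ → R} {C : ℝ} (hf : Summable fun i ↦ ‖f i‖) (hg : ∀ i j, ‖g i j‖ ≤ C)
    (hL : ∀ i, Tendsto (g i) atTop (𝓝 (L i))) :
    Tendsto (fun n ↦ ∑ p ∈ antidiagonal n, f p.1 * g p.1 p.2) atTop
      (𝓝 (∑' i, f i * L i)) := by
  have extend (n : ℕ) : ∑ p ∈ antidiagonal n, f p.1 * g p.1 p.2 =
      ∑' i, if i ∈ range (n + 1) then f i * g i (n - i) else 0 := by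
    rw [Nat.sum_antidiagonal_eq_sum_range_succ_mk, ← sum_extend_by_zero, tsum_eq_sum]
    intro i hi
    exact if_neg hi
  simp only [extend]
  refine tendsto_tsum_of_dominated_convergence (hf.mul_right C) (fun i ↦ ?_)
    (.of_forall fun n i ↦ ?_)
  · refine (((hL i).comp (tendsto_sub_atTop_nat i)).const_mul (f i)).congr' ?_
    filter_upwards [eventually_ge_atTop i] with n hn
    rw [if_pos (mem_range_succ_iff.2 hn), Function.comp_apply]
  · split_ifs
    · exact (norm_mul_le _ _).trans (by gcongr; exact hg _ _)
    · rw [norm_zero]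
      exact mul_nonneg (norm_nonneg _) ((norm_nonneg _).trans (hg 0 0))

section Limits

variable {a b Q : ℂ} {α β : ℕ → ℂ}

theorem IsBaileyPair.tendsto (h : IsBaileyPair a Q α β) (hQ : ‖Q‖ < 1) (ha : ‖a * Q‖ < 1)
    (hα : Summable fun r ↦ ‖α r‖) :
    Tendsto β atTop (𝓝 ((∑' r, α r) / (qPochInf Q Q * qPochInf (a * Q) Q))) := by
  obtain ⟨C, hC⟩ := exists_norm_le_of_tendsto (tendsto_inv_qPoch hQ hQ)
  obtain ⟨D, hD⟩ := exists_norm_le_of_tendsto (tendsto_inv_qPoch ha hQ)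
  have hC₀ : 0 ≤ C := (norm_nonneg _).trans (hC 0)
  have hβ : β = fun n ↦ ∑ p ∈ antidiagonal n,
      α p.1 * ((qPoch Q Q p.2)⁻¹ * (qPoch (a * Q) Q (2 * p.1 + p.2))⁻¹) := by
    funext n
    rw [h n]
    refine sum_congr rfl fun p hp ↦ ?_
    rw [← mem_antidiagonal.1 hp, ← mul_inv, ← div_eq_mul_inv]
    congr 3
    ring
  rw [hβ, div_eq_mul_inv, ← tsum_mul_right]
  refine tendsto_sum_antidiagonal_mul
    (g := fun i j ↦ (qPoch Q Q j)⁻¹ * (qPoch (a * Q) Q (2 * i + j))⁻¹) (C := C * D) hα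
    (fun i j ↦ ?_) fun i ↦ ?_
  · rw [norm_mul]
    gcongr
    exacts [hC _, hD _]
  · rw [mul_inv]
    refine (tendsto_inv_qPoch hQ hQ).mul ((tendsto_inv_qPoch ha hQ).comp ?_)
    exact tendsto_atTop_mono (fun j ↦ Nat.le_add_left j _) tendsto_id

/-- The limit `n → ∞` of `IsBaileyPair.step`. -/
theorem IsBaileyPair.tsum_vandermondeWeight_mul (h : IsBaileyPair a Q α β) (hQ : ‖Q‖ < 1)
    (ha : ‖a * Q‖ < 1) (hb : ‖b‖ < 1) (hα : Summable fun r ↦ ‖α r‖) :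
    ∑' n, vandermondeWeight b (a * Q) Q n * β n =
      qPochInf b Q / qPochInf (a * Q) Q *
        ∑' r, vandermondeWeight b (a * Q) Q r / qPoch b Q r * α r := by
  have hW := summable_norm_vandermondeWeight b (a * Q) hQ
  obtain ⟨C, hC⟩ := exists_norm_le_of_tendsto (tendsto_inv_qPoch hQ hQ)
  have hα' : Summable fun r ↦ ‖vandermondeWeight b (a * Q) Q r / qPoch b Q r * α r‖ := by
    have hα₀ := (tendsto_inv_qPoch hb hQ).mul hα.of_norm.tendsto_atTop_zero
    simp only [div_eq_mul_inv, mul_assoc]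
    exact (hW.mul_tendsto_const (Nat.cofinite_eq_atTop ▸ hα₀)).norm
  have hβ : Summable fun n ↦ ‖vandermondeWeight b (a * Q) Q n * β n‖ :=
    (hW.mul_tendsto_const (Nat.cofinite_eq_atTop ▸ h.tendsto hQ ha hα)).norm
  have left : Tendsto (fun n ↦ kernelSum (baileyKernel b (a * Q) Q) β n / qPoch b Q n) atTop
      (𝓝 ((∑' n, vandermondeWeight b (a * Q) Q n * β n) * (qPochInf Q Q)⁻¹ *
        (qPochInf b Q)⁻¹)) := by
    rw [← tsum_mul_right]
    refine ((tendsto_sum_antidiagonal_mul (g := fun _ j ↦ (qPoch Q Q j)⁻¹) hβ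
      (fun _ j ↦ hC j) fun _ ↦ tendsto_inv_qPoch hQ hQ).mul (tendsto_inv_qPoch hb hQ)).congr
      fun n ↦ ?_
    rw [kernelSum, div_eq_mul_inv]
    congr 1
    refine sum_congr rfl fun p _ ↦ ?_
    rw [baileyKernel]
    ring
  have right := (h.step (qPoch_ne_zero hQ hQ) (qPoch_ne_zero ha hQ) (qPoch_ne_zero hb hQ)).tendsto
    hQ ha hα'
  have key := tendsto_nhds_unique left right
  have hQinf := qPochInf_ne_zero hQ hQ
  have hainf := qPochInf_ne_zero ha hQ
  have hbinf := qPochInf_ne_zero hb hQ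
  field_simp at key ⊢
  linear_combination key

end Limits

section JacobiTripleProduct

variable {z w : ℂ}

lemma summable_norm_thetaTerm (hP : ‖z * w‖ < 1) : Summable fun r ↦ ‖thetaTerm z w r‖ := by
  have hw := summable_norm_vandermondeWeight w 0 hP
  have hz := (summable_nat_add_iff 1).2 (summable_norm_vandermondeWeight z 0 hP)
  refine .of_nonneg_of_le (fun _ ↦ norm_nonneg _) (fun r ↦ ?_) (hw.add hz)
  rw [thetaTerm_eq_add, thetaCoeff_natCast, thetaCoeff_neg_natCast]
  exact norm_add_le _ _

theorem jacobi_triple_product (hP : ‖z * w‖ < 1) :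
    ∑' r, thetaTerm z w r =
      qPochInf (z * w) (z * w) * qPochInf w (z * w) * qPochInf z (z * w) := by
  have hPP : ‖z * w * (z * w)‖ < 1 := by
    rw [norm_mul]
    exact mul_lt_one_of_nonneg_of_lt_one_left (norm_nonneg _) hP hP.le
  have left := (isBaileyPair_thetaTerm (qPoch_ne_zero hP hP)).tendsto hP hPP
    (by simpa only [norm_div] using (summable_norm_thetaTerm hP).div_const _)
  have right : Tendsto (fun n ↦ qPoch w (z * w) n * qPoch z (z * w) (n + 1) /
      qPoch (z * w) (z * w) (2 * n + 1)) atTop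
      (𝓝 (qPochInf w (z * w) * qPochInf z (z * w) / qPochInf (z * w) (z * w))) :=
    ((tendsto_qPoch w hP).mul ((tendsto_qPoch z hP).comp (tendsto_add_atTop_nat 1))).div
      ((tendsto_qPoch _ hP).comp (tendsto_atTop_mono (fun n ↦ (by lia : n ≤ 2 * n + 1)) tendsto_id))
      (qPochInf_ne_zero hP hP)
  have key := tendsto_nhds_unique left right
  have hPinf := qPochInf_ne_zero hP hP
  have hsplit := hPinf
  rw [qPochInf_eq_one_sub_mul _ hP, mul_ne_zero_iff] at hsplit
  obtain ⟨hP₁, hPPinf⟩ := hsplit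
  rw [tsum_div_const, div_div, mul_left_comm, ← qPochInf_eq_one_sub_mul _ hP] at key
  field_simp at key ⊢
  linear_combination key

end JacobiTripleProduct

section KernelSum

variable {R : Type*} [NormedCommRing R] {k : ℕ → ℕ → R} {g : ℕ → ℝ}

lemma norm_kernelSum_le {β : ℕ → R} {B : ℝ} (hg : Summable g) (hk : ∀ m s, ‖k m s‖ ≤ g m)
    (hβ : ∀ n, ‖β n‖ ≤ B) (n : ℕ) : ‖kernelSum k β n‖ ≤ (∑' m, g m) * B := by
  have hg₀ (m : ℕ) : 0 ≤ g m := (norm_nonneg _).trans (hk m 0)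
  have hB : 0 ≤ B := (norm_nonneg _).trans (hβ 0)
  calc ‖kernelSum k β n‖
      ≤ ∑ p ∈ antidiagonal n, g p.1 * B := norm_sum_le_of_le _ fun p _ ↦
        (norm_mul_le _ _).trans (mul_le_mul (hk _ _) (hβ _) (norm_nonneg _) (hg₀ _))
    _ = (∑ m ∈ range (n + 1), g m) * B := by
        rw [← sum_mul, Nat.sum_antidiagonal_eq_sum_range_succ_mk]
    _ ≤ _ := by
        gcongr
        exact hg.sum_le_tsum _ fun m _ ↦ hg₀ m

lemma norm_iterate_kernelSum_le {β : ℕ → R} {B : ℝ} (hg : Summable g)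
    (hk : ∀ m s, ‖k m s‖ ≤ g m) (hβ : ∀ n, ‖β n‖ ≤ B) (K n : ℕ) :
    ‖(kernelSum k)^[K] β n‖ ≤ (∑' m, g m) ^ K * B := by
  induction K generalizing n with
  | zero => simpa using hβ n
  | succ K ih =>
    rw [Function.iterate_succ_apply', pow_succ', mul_assoc]
    exact norm_kernelSum_le hg hk ih n

/-- The pairs `(m + s, i)` with `m = t i` determine `(i, s)`, so the double series is dominated
by a product of two convergent ones. -/
lemma summable_mul_norm_kernel {ι : Type*} {t : ι → ℕ} {v : ι → R} {h : ℕ → ℝ}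
    (hk : ∀ m s, ‖k m s‖ ≤ g m) (hh : Summable h) (hh₀ : ∀ n, 0 ≤ h n)
    (hv : Summable fun i ↦ g (t i) * ‖v i‖) :
    Summable fun p : ι × ℕ ↦ h (t p.1 + p.2) * ‖k (t p.1) p.2 * v p.1‖ := by
  have hg₀ (m : ℕ) : 0 ≤ g m := (norm_nonneg _).trans (hk m 0)
  have majorant := hh.mul_of_nonneg hv hh₀ fun i ↦ mul_nonneg (hg₀ _) (norm_nonneg _)
  have inj : Function.Injective fun p : ι × ℕ ↦ (t p.1 + p.2, p.1) := by
    rintro ⟨i, s⟩ ⟨i', s'⟩ hp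
    grind
  refine .of_nonneg_of_le (fun _ ↦ mul_nonneg (hh₀ _) (norm_nonneg _)) (fun p ↦ ?_)
    (majorant.comp_injective inj)
  exact mul_le_mul_of_nonneg_left ((norm_mul_le _ _).trans <|
    mul_le_mul_of_nonneg_right (hk _ _) (norm_nonneg _)) (hh₀ _)

lemma summable_norm_mul_kernel {u : ℕ → R} (hk : ∀ m s, ‖k m s‖ ≤ g m)
    (hu : Summable fun n ↦ ‖u n‖) (m : ℕ) : Summable fun s ↦ ‖u (m + s) * k m s‖ := by
  refine .of_nonneg_of_le (fun _ ↦ norm_nonneg _) (fun s ↦ ?_)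
    ((hu.comp_injective (add_right_injective m)).mul_right (g m))
  exact (norm_mul_le _ _).trans (mul_le_mul_of_nonneg_left (hk m s) (norm_nonneg _))

lemma norm_tsum_mul_kernel_le {u : ℕ → R} (hk : ∀ m s, ‖k m s‖ ≤ g m)
    (hu : Summable fun n ↦ ‖u n‖) (m : ℕ) :
    ‖∑' s, u (m + s) * k m s‖ ≤ (∑' n, ‖u n‖) * g m := by
  have shift := hu.comp_injective (add_right_injective m)
  calc ‖∑' s, u (m + s) * k m s‖
      ≤ ∑' s, ‖u (m + s)‖ * g m :=
        tsum_of_norm_bounded (shift.mul_right (g m)).hasSum fun s ↦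
          (norm_mul_le _ _).trans (mul_le_mul_of_nonneg_left (hk m s) (norm_nonneg _))
    _ = (∑' s, ‖u (m + s)‖) * g m := tsum_mul_right
    _ ≤ _ := mul_le_mul_of_nonneg_right
        (shift.tsum_le_tsum_of_inj _ (add_right_injective m) (fun _ _ ↦ norm_nonneg _)
          (fun _ ↦ le_rfl) hu) ((norm_nonneg _).trans (hk m 0))

variable [CompleteSpace R]

lemma summable_mul_kernel_mul {ι : Type*} {t : ι → ℕ} {u : ℕ → R} {v : ι → R}
    (hk : ∀ m s, ‖k m s‖ ≤ g m) (hu : Summable fun n ↦ ‖u n‖)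
    (hv : Summable fun i ↦ g (t i) * ‖v i‖) :
    Summable fun p : ι × ℕ ↦ u (t p.1 + p.2) * (k (t p.1) p.2 * v p.1) :=
  .of_norm_bounded (summable_mul_norm_kernel hk hu (fun _ ↦ norm_nonneg _) hv)
    fun _ ↦ norm_mul_le _ _

lemma tsum_mul_kernel_mul {ι : Type*} {t : ι → ℕ} {u : ℕ → R} {v : ι → R}
    (hk : ∀ m s, ‖k m s‖ ≤ g m) (hu : Summable fun n ↦ ‖u n‖)
    (hv : Summable fun i ↦ g (t i) * ‖v i‖) :
    ∑' p : ι × ℕ, u (t p.1 + p.2) * (k (t p.1) p.2 * v p.1) =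
      ∑' i, (∑' s, u (t i + s) * k (t i) s) * v i := by
  rw [(summable_mul_kernel_mul hk hu hv).tsum_prod]
  refine tsum_congr fun i ↦ ?_
  rw [← (summable_norm_mul_kernel hk hu (t i)).of_norm.tsum_mul_right]
  simp only [mul_assoc]

lemma tsum_mul_kernelSum {u β : ℕ → R} (hk : ∀ m s, ‖k m s‖ ≤ g m)
    (hu : Summable fun n ↦ ‖u n‖) (hβ : Summable fun n ↦ g n * ‖β n‖) :
    ∑' n, u n * kernelSum k β n = ∑' m, (∑' s, u (m + s) * k m s) * β m := by
  have hsum := summable_mul_kernel_mul (t := id) hk hu hβ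
  calc ∑' n, u n * kernelSum k β n
      = ∑' n, ∑' p : antidiagonal n, u (p.1.1 + p.1.2) * (k p.1.1 p.1.2 * β p.1.1) := by
        refine tsum_congr fun n ↦ ?_
        rw [tsum_fintype, univ_eq_attach,
          sum_attach (antidiagonal n) fun p ↦ u (p.1 + p.2) * (k p.1 p.2 * β p.1), kernelSum,
          mul_sum]
        exact sum_congr rfl fun p hp ↦ by rw [mem_antidiagonal.1 hp]
    _ = ∑' p : ℕ × ℕ, u (p.1 + p.2) * (k p.1 p.2 * β p.1) := by
        rw [← HasAntidiagonal.sigmaAntidiagonalEquivProd.tsum_eq]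
        have := HasAntidiagonal.sigmaAntidiagonalEquivProd.summable_iff.2 hsum
        exact this.tsum_sigma.symm
    _ = _ := tsum_mul_kernel_mul (t := id) hk hu hβ

end KernelSum

/-- A partition with at most `k + 1` parts, described by the partition that remains when its
largest part is removed, and the excess of that part over the next one. -/
def PartK.consEquiv (k : ℕ) : PartK k × ℕ ≃ PartK (k + 1) where
  toFun p := ⟨fun i ↦ Nat.casesOn i (p.1.1 0 + p.2) p.1.1, by
    refine antitone_nat_of_succ_le fun i ↦ ?_
    cases i with
    | zero => exact Nat.le_add_right _ _
    | succ i => exact p.1.2.1 i.le_succ, by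
    rintro (_ | i) hi
    · omega
    · exact p.1.2.2 i (by omega)⟩
  invFun l := (⟨fun i ↦ l.1 (i + 1), fun _ _ h ↦ l.2.1 (by omega),
    fun i hi ↦ l.2.2 (i + 1) (by omega)⟩, l.1 0 - l.1 1)
  left_inv p := by
    refine Prod.ext (Subtype.ext rfl) ?_
    exact Nat.add_sub_cancel_left _ _
  right_inv l := by
    refine Subtype.ext (funext fun i ↦ ?_)
    cases i with
    | zero => exact Nat.add_sub_of_le (l.2.1 zero_le_one)
    | succ i => rfl

instance : Unique (PartK 0) where
  default := ⟨0, antitone_const, fun _ _ ↦ rfl⟩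
  uniq l := Subtype.ext (funext fun i ↦ l.2.2 i i.zero_le)

/-- The partitions with at most one part. -/
def PartK.oneEquiv : ℕ ≃ PartK 1 :=
  (Equiv.uniqueProd ℕ (PartK 0)).symm.trans (consEquiv 0)

lemma PartK.oneEquiv_apply_zero (n : ℕ) : (oneEquiv n).1 0 = n := n.zero_add

/-- The weight of the partition `l` in the `K`-fold iterate of the transform `kernelSum k`
applied to `β`: the consecutive parts `l (i + 1) ≤ l i` are linked by the kernel. -/
def chainWeight {R : Type*} [CommSemiring R] (k : ℕ → ℕ → R) (β : ℕ → R) (K : ℕ)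
    (l : ℕ → ℕ) : R :=
  (∏ i ∈ range K, k (l (i + 1)) (l i - l (i + 1))) * β (l K)

section ChainWeight

lemma chainWeight_zero {R : Type*} [CommSemiring R] (k : ℕ → ℕ → R) (β : ℕ → R) (l : ℕ → ℕ) :
    chainWeight k β 0 l = β (l 0) := one_mul _

lemma chainWeight_consEquiv {R : Type*} [CommSemiring R] (k : ℕ → ℕ → R) (β : ℕ → R) (K : ℕ)
    (p : PartK (K + 1) × ℕ) :
    chainWeight k β (K + 1) (PartK.consEquiv (K + 1) p).1 =
      k (p.1.1 0) p.2 * chainWeight k β K p.1.1 := by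
  rw [chainWeight, prod_range_succ', mul_comm (∏ _ ∈ _, _), mul_assoc]
  congr 2
  exact Nat.add_sub_cancel_left _ _

variable {R : Type*} [NormedCommRing R] {k : ℕ → ℕ → R} {β : ℕ → R} {g : ℕ → ℝ} {B : ℝ}

lemma summable_mul_norm_chainWeight (hg : Summable g) (hk : ∀ m s, ‖k m s‖ ≤ g m)
    (hβ : ∀ n, ‖β n‖ ≤ B) (K : ℕ) {h : ℕ → ℝ} (hh : Summable h) (hh₀ : ∀ n, 0 ≤ h n) :
    Summable fun l : PartK (K + 1) ↦ h (l.1 0) * ‖chainWeight k β K l.1‖ := by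
  induction K generalizing h with
  | zero =>
    rw [← PartK.oneEquiv.summable_iff]
    refine .of_nonneg_of_le (fun n ↦ mul_nonneg (hh₀ _) (norm_nonneg _)) (fun n ↦ ?_)
      (hh.mul_right B)
    rw [Function.comp_apply, PartK.oneEquiv_apply_zero, chainWeight_zero,
      PartK.oneEquiv_apply_zero]
    exact mul_le_mul_of_nonneg_left (hβ n) (hh₀ n)
  | succ K ih =>
    have hg₀ (m : ℕ) : 0 ≤ g m := (norm_nonneg _).trans (hk m 0)
    rw [← (PartK.consEquiv (K + 1)).summable_iff]
    refine (summable_mul_norm_kernel hk hh hh₀ (ih hg hg₀)).congr fun p ↦ ?_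
    rw [Function.comp_apply, chainWeight_consEquiv]
    rfl

/-- A weighted sum over partitions is evaluated by removing the parts one at a time, starting
from the largest. -/
theorem tsum_mul_chainWeight [CompleteSpace R] (hg : Summable g) (hk : ∀ m s, ‖k m s‖ ≤ g m)
    (hβ : ∀ n, ‖β n‖ ≤ B) (K : ℕ) {u : ℕ → R} (hu : Summable fun n ↦ ‖u n‖) :
    ∑' l : PartK (K + 1), u (l.1 0) * chainWeight k β K l.1 =
      ∑' n, u n * (kernelSum k)^[K] β n := by
  have hg₀ (m : ℕ) : 0 ≤ g m := (norm_nonneg _).trans (hk m 0)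
  induction K generalizing u with
  | zero =>
    rw [← PartK.oneEquiv.tsum_eq]
    exact tsum_congr fun n ↦ by
      rw [chainWeight_zero, PartK.oneEquiv_apply_zero, Function.iterate_zero, id]
  | succ K ih =>
    have bound := norm_iterate_kernelSum_le hg hk hβ K
    have hiter : Summable fun n ↦ g n * ‖(kernelSum k)^[K] β n‖ :=
      .of_nonneg_of_le (fun n ↦ mul_nonneg (hg₀ n) (norm_nonneg _))
        (fun n ↦ mul_le_mul_of_nonneg_left (bound n) (hg₀ n)) (hg.mul_right _)
    have hu' : Summable fun m ↦ ‖∑' s, u (m + s) * k m s‖ :=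
      .of_nonneg_of_le (fun _ ↦ norm_nonneg _) (norm_tsum_mul_kernel_le hk hu) (hg.mul_left _)
    calc ∑' l : PartK (K + 2), u (l.1 0) * chainWeight k β (K + 1) l.1
        = ∑' p : PartK (K + 1) × ℕ,
            u (p.1.1 0 + p.2) * (k (p.1.1 0) p.2 * chainWeight k β K p.1.1) := by
          rw [← (PartK.consEquiv (K + 1)).tsum_eq]
          exact tsum_congr fun p ↦ by rw [chainWeight_consEquiv]; rfl
      _ = ∑' l : PartK (K + 1), (∑' s, u (l.1 0 + s) * k (l.1 0) s) * chainWeight k β K l.1 :=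
          tsum_mul_kernel_mul hk hu (summable_mul_norm_chainWeight hg hk hβ K hg hg₀)
      _ = ∑' m, (∑' s, u (m + s) * k m s) * (kernelSum k)^[K] β m := ih hu'
      _ = _ := by rw [Function.iterate_succ_apply', tsum_mul_kernelSum hk hu hiter]

end ChainWeight

section Specialization

lemma exists_norm_baileyKernel_le (b d : ℂ) {Q : ℂ} (hQ : ‖Q‖ < 1) :
    ∃ C, ∀ m s, ‖baileyKernel b d Q m s‖ ≤ ‖vandermondeWeight b d Q m‖ * C := by
  obtain ⟨C, hC⟩ := exists_norm_le_of_tendsto (tendsto_inv_qPoch hQ hQ)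
  refine ⟨C, fun m s ↦ ?_⟩
  rw [baileyKernel, div_eq_mul_inv, norm_mul]
  gcongr
  exact hC s

lemma tsum_mul_chainWeight_baileyKernel {Q : ℂ} (hQ : ‖Q‖ < 1) (K : ℕ) {u : ℕ → ℂ}
    (hu : Summable fun n ↦ ‖u n‖) :
    ∑' l : PartK (K + 1), u (l.1 0) * chainWeight (baileyKernel 0 (Q * Q) Q)
        (fun n ↦ (qPoch Q Q n * qPoch (-Q) Q n)⁻¹) K l.1 =
      ∑' n, u n * chainBeta Q K n := by
  obtain ⟨C, hC⟩ := exists_norm_baileyKernel_le 0 (Q * Q) hQ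
  have hβ := (tendsto_inv_qPoch hQ hQ).mul (tendsto_inv_qPoch (norm_neg Q ▸ hQ) hQ)
  simp only [← mul_inv] at hβ
  obtain ⟨B, hB⟩ := exists_norm_le_of_tendsto hβ
  exact tsum_mul_chainWeight ((summable_norm_vandermondeWeight 0 (Q * Q) hQ).mul_right C) hC hB K hu

variable (q : ℂ)

lemma summand_eq_vandermondeWeight_mul_chainWeight (K : ℕ) (l : PartK (K + 1)) :
    q ^ (2 * wtK (K + 1) l + 2 * n2K (K + 1) l - l.1 0 ^ 2) * qPoch (-q) (q ^ 2) (l.1 0) /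
        (qPoch (-q ^ 2) (q ^ 2) (l.1 (K + 1 - 1)) * pochK (q ^ 2) (q ^ 2) (K + 1) l) =
      vandermondeWeight (-q ^ 3) (q ^ 2 * q ^ 2) (q ^ 2) (l.1 0) *
        chainWeight (baileyKernel 0 (q ^ 2 * q ^ 2) (q ^ 2))
          (fun n ↦ (qPoch (q ^ 2) (q ^ 2) n * qPoch (-q ^ 2) (q ^ 2) n)⁻¹) K l.1 := by
  have exponent : 2 * wtK (K + 1) l + 2 * n2K (K + 1) l - l.1 0 ^ 2 =
      (l.1 0 ^ 2 + 2 * l.1 0) + 2 * ∑ i ∈ range K, (l.1 (i + 1) ^ 2 + l.1 (i + 1)) := by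
    rw [wtK, n2K, sum_range_succ', sum_range_succ', sum_add_distrib]
    lia
  have last : l.1 K - l.1 (K + 1) = l.1 K := by rw [l.2.2 (K + 1) le_rfl, Nat.sub_zero]
  have weights : chainWeight (baileyKernel 0 (q ^ 2 * q ^ 2) (q ^ 2))
      (fun n ↦ (qPoch (q ^ 2) (q ^ 2) n * qPoch (-q ^ 2) (q ^ 2) n)⁻¹) K l.1 =
        q ^ (2 * ∑ i ∈ range K, (l.1 (i + 1) ^ 2 + l.1 (i + 1))) /
          (qPoch (-q ^ 2) (q ^ 2) (l.1 K) * pochK (q ^ 2) (q ^ 2) (K + 1) l) := by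
    simp only [chainWeight, baileyKernel, vandermondeWeight_zero_left, prod_div_distrib,
      prod_pow_eq_pow_sum, ← pow_mul, ← mul_sum, pochK, prod_range_succ, last]
    field_simp
  rw [exponent, weights, vandermondeWeight_neg_cube, Nat.add_sub_cancel]
  ring

variable {q}

lemma vandermondeWeight_neg_cube_div_mul_thetaTerm (hq : ‖q‖ < 1) (w : ℂ) (r : ℕ) :
    vandermondeWeight (-q ^ 3) (q ^ 2 * q ^ 2) (q ^ 2) r / qPoch (-q ^ 3) (q ^ 2) r *
        (thetaTerm (q ^ 2) w r / (1 - q ^ 2)) =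
      (1 + q) / (1 - q ^ 2) * thetaTerm q (q ^ 3 * w) r := by
  have hpow (n : ℕ) (hn : n ≠ 0) : ‖-q ^ n‖ < 1 := by
    simpa using pow_lt_one₀ (norm_nonneg q) hq hn
  have hQ : ‖q ^ 2‖ < 1 := by simpa using hpow 2 two_ne_zero
  have hr := qPoch_ne_zero (hpow 3 three_ne_zero) hQ r
  have shift : qPoch (-q) (q ^ 2) r * (1 + q ^ (2 * r + 1)) =
      (1 + q) * qPoch (-q ^ 3) (q ^ 2) r := by
    have := qPoch_succ_left (-q) (q ^ 2) r
    rw [qPoch_succ] at this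
    ring_nf at this ⊢
    exact this
  calc _ = qPoch (-q) (q ^ 2) r / (qPoch (-q ^ 3) (q ^ 2) r * (1 - q ^ 2)) *
          (thetaTerm (q ^ 2) w r * q ^ (r ^ 2 + 2 * r)) := by
        rw [vandermondeWeight_neg_cube, div_mul_div_comm]
        ring
    _ = qPoch (-q) (q ^ 2) r * (1 + q ^ (2 * r + 1)) /
          (qPoch (-q ^ 3) (q ^ 2) r * (1 - q ^ 2)) * thetaTerm q (q ^ 3 * w) r := by
        rw [thetaTerm_sq_mul_pow]
        ring
    _ = _ := by rw [shift, mul_comm (1 + q), mul_div_mul_left _ _ hr]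

theorem tsum_vandermondeWeight_mul_chainBeta (hq : ‖q‖ < 1) (K : ℕ) :
    ∑' n, vandermondeWeight (-q ^ 3) (q ^ 2 * q ^ 2) (q ^ 2) n * chainBeta (q ^ 2) K n =
      qPochInf (-q) (q ^ 2) / qPochInf (q ^ 2) (q ^ 2) *
        ∑' r, thetaTerm q (q ^ (4 * (K + 1) + 1)) r := by
  have hpow (n : ℕ) (hn : n ≠ 0) : ‖q ^ n‖ < 1 := by
    simpa using pow_lt_one₀ (norm_nonneg q) hq hn
  have hQ := hpow 2 two_ne_zero
  have hQQ : ‖q ^ 2 * q ^ 2‖ < 1 := by simpa [← pow_add] using hpow 4 four_ne_zero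
  have hb : ‖-q ^ 3‖ < 1 := by simpa using hpow 3 three_ne_zero
  have pair := isBaileyPair_chainBeta (qPoch_ne_zero hQ hQ)
    (qPoch_ne_zero (norm_neg (q ^ 2) ▸ hQ) hQ) K
  have hα : Summable fun r ↦ ‖thetaTerm (q ^ 2) ((q ^ 2) ^ (2 * K + 1)) r / (1 - q ^ 2)‖ := by
    have nome : q ^ 2 * (q ^ 2) ^ (2 * K + 1) = q ^ (4 * K + 4) := by ring
    simpa only [norm_div] using
      (summable_norm_thetaTerm (nome ▸ hpow _ (by omega))).div_const ‖1 - q ^ 2‖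
  have arg : q ^ 3 * (q ^ 2) ^ (2 * K + 1) = q ^ (4 * (K + 1) + 1) := by ring
  rw [pair.tsum_vandermondeWeight_mul hQ hQQ hb hα]
  simp only [vandermondeWeight_neg_cube_div_mul_thetaTerm hq, tsum_mul_left, arg]
  rw [qPochInf_eq_one_sub_mul (-q) hQ, qPochInf_eq_one_sub_mul (q ^ 2) hQ, mul_div_mul_comm,
    sub_neg_eq_add, ← mul_assoc, mul_comm (qPochInf _ _ / _), neg_mul, ← pow_succ']

end Specialization

/-- Identity (17): for `k ≥ 1`, `|q| < 1`,
`Σ_{l(λ)≤k} q^{2|λ|+2n_2(λ)-λ_1^2} (-q;q^2)_{λ_1} / ((-q^2;q^2)_{λ_k} (q^2;q^2)_λ)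
  = ((-q;q^2)_∞/(q^2;q^2)_∞) (q^{4k+2},q^{4k+1},q;q^{4k+2})_∞`. -/
theorem rr_type_17 (k : ℕ) (hk : 1 ≤ k) (q : ℂ) (hq : ‖q‖ < 1) :
    ∑' lam : PartK k,
        q ^ (2 * wtK k lam + 2 * n2K k lam - lam.1 0 ^ 2) *
          qPoch (-q) (q ^ 2) (lam.1 0) /
          (qPoch (-q ^ 2) (q ^ 2) (lam.1 (k - 1)) * pochK (q ^ 2) (q ^ 2) k lam)
      = qPochInf (-q) (q ^ 2) / qPochInf (q ^ 2) (q ^ 2) *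
          (qPochInf (q ^ (4 * k + 2)) (q ^ (4 * k + 2)) *
            qPochInf (q ^ (4 * k + 1)) (q ^ (4 * k + 2)) *
            qPochInf q (q ^ (4 * k + 2))) := by
  obtain ⟨K, rfl⟩ := Nat.exists_eq_add_of_le' hk
  have hQ : ‖q ^ 2‖ < 1 := by simpa using pow_lt_one₀ (norm_nonneg q) hq two_ne_zero
  have nome : q * q ^ (4 * (K + 1) + 1) = q ^ (4 * (K + 1) + 2) := (pow_succ' q _).symm
  have hnome : ‖q * q ^ (4 * (K + 1) + 1)‖ < 1 := by
    simpa [nome] using pow_lt_one₀ (norm_nonneg q) hq (4 * (K + 1) + 1).succ_ne_zero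
  calc _ = ∑' n, vandermondeWeight (-q ^ 3) (q ^ 2 * q ^ 2) (q ^ 2) n * chainBeta (q ^ 2) K n := by
        simp only [summand_eq_vandermondeWeight_mul_chainWeight]
        exact tsum_mul_chainWeight_baileyKernel hQ K (summable_norm_vandermondeWeight _ _ hQ)
    _ = qPochInf (-q) (q ^ 2) / qPochInf (q ^ 2) (q ^ 2) *
          ∑' r, thetaTerm q (q ^ (4 * (K + 1) + 1)) r := tsum_vandermondeWeight_mul_chainBeta hq K
    _ = _ := by rw [jacobi_triple_product hnome, nome]
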